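/- For every channel k : 𝒴 → PMF(𝒴), the composed channel q := k ∘ g : 𝒳 → PMF(𝒴) satisfies (i) the expected distortion of the joint of (p_X, q) equals that of the joint of (distribution of Y, k): E[d_T(f(X), h(Ŷ))] = E[d_T(h(Y), h(Ŷ))], and (ii) I(X;Ŷ) under (p_X, q) is at most I(Y;Ŷ) under (distribution of Y, k). Consequently, R_XY(D;T) ≤ R_Y(D;T) for every D > 0. -/

import Mathlib

open scoped BigOperators

/-- Joint distribution P(a,b) = p(a)·k(a)(b) induced by a source `p` and a channel `k`,
as a real number. -/
noncomputable def jointP {A B : Type*} [Fintype A] [Fintype B] (p : PMF A) (k : A → PMF B)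
    (a : A) (b : B) : ℝ :=
  (p a * k a b).toReal

/-- Marginal distribution of the second coordinate of the joint induced by `(p, k)`. -/
noncomputable def margSnd {A B : Type*} [Fintype A] [Fintype B] (p : PMF A) (k : A → PMF B)
    (b : B) : ℝ :=
  ∑ a, jointP p k a b

/-- Mutual information I(A;B) = ∑_{a,b} P(a,b)·log(P(a,b)/(P(a)·P(b))) of the joint
induced by `(p, k)`; the convention 0·log 0 = 0 holds automatically in Lean. -/
noncomputable def mutualInfo {A B : Type*} [Fintype A] [Fintype B] (p : PMF A)
    (k : A → PMF B) : ℝ :=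
  ∑ a, ∑ b, jointP p k a b * Real.log (jointP p k a b / ((p a).toReal * margSnd p k b))

/-- Expected distortion E[d(A,B)] under the joint induced by `(p, k)`. -/
noncomputable def expDist {A B : Type*} [Fintype A] [Fintype B] (p : PMF A) (k : A → PMF B)
    (d : A → B → ℝ) : ℝ :=
  ∑ a, ∑ b, jointP p k a b * d a b

/-- Rate-distortion function: infimum of mutual information over all channels `A → PMF B`
meeting the expected-distortion constraint `≤ D`. -/
noncomputable def rate {A B : Type*} [Fintype A] [Fintype B] (p : PMF A) (d : A → B → ℝ)
    (D : ℝ) : ℝ :=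
  sInf { r : ℝ | ∃ k : A → PMF B, expDist p k d ≤ D ∧ r = mutualInfo p k }

/-- Conditional probability P(A = a | B = b) under the joint induced by `(p, k)`. -/
noncomputable def condProb {A B : Type*} [Fintype A] [Fintype B] (p : PMF A) (k : A → PMF B)
    (a : A) (b : B) : ℝ :=
  jointP p k a b / margSnd p k b

section Aux

variable {A B C : Type*} [Fintype A] [Fintype B] [Fintype C]

lemma PMF.sum_toReal_eq_one (p : PMF A) : ∑ a, (p a).toReal = 1 := by
  rw [← ENNReal.toReal_sum fun a _ => p.apply_ne_top a, ← tsum_fintype (L := .unconditional A), p.tsum_coe,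
    ENNReal.toReal_one]

lemma PMF.sum_map_toReal_mul (p : PMF A) (g : A → C) (F : C → ℝ) :
    ∑ c, ((p.map g) c).toReal * F c = ∑ a, (p a).toReal * F (g a) := by
  classical
  have hmap : ∀ c, ((p.map g) c).toReal = ∑ a, if c = g a then (p a).toReal else 0 := by
    intro c
    rw [PMF.map_apply, tsum_fintype, ENNReal.toReal_sum]
    · refine Finset.sum_congr rfl fun a _ => ?_
      split_ifs <;> simp
    · intro a _
      split_ifs
      · exact p.apply_ne_top a
      · exact ENNReal.zero_ne_top
  simp_rw [hmap, Finset.sum_mul]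
  rw [Finset.sum_comm]
  simp [ite_mul]

lemma jointP_eq_mul (p : PMF A) (k : A → PMF B) (a : A) (b : B) :
    jointP p k a b = (p a).toReal * (k a b).toReal :=
  ENNReal.toReal_mul

lemma jointP_nonneg (p : PMF A) (k : A → PMF B) (a : A) (b : B) : 0 ≤ jointP p k a b :=
  ENNReal.toReal_nonneg

lemma jointP_le_margSnd (p : PMF A) (k : A → PMF B) (a : A) (b : B) :
    jointP p k a b ≤ margSnd p k b :=
  Finset.single_le_sum (f := fun a => jointP p k a b) (fun a _ => jointP_nonneg p k a b)
    (Finset.mem_univ a)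

lemma expDist_eq_sum (p : PMF A) (k : A → PMF B) (d : A → B → ℝ) :
    expDist p k d = ∑ a, (p a).toReal * ∑ b, (k a b).toReal * d a b := by
  simp only [expDist, jointP_eq_mul, Finset.mul_sum, mul_assoc]

lemma mutualInfo_eq_sum (p : PMF A) (k : A → PMF B) :
    mutualInfo p k =
      ∑ a, (p a).toReal * ∑ b, (k a b).toReal * Real.log ((k a b).toReal / margSnd p k b) := by
  simp only [mutualInfo, Finset.mul_sum]
  refine Finset.sum_congr rfl fun a _ => Finset.sum_congr rfl fun b _ => ?_
  rw [jointP_eq_mul]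
  rcases eq_or_ne (p a).toReal 0 with ha | ha
  · simp [ha]
  · rw [mul_div_mul_left _ _ ha, mul_assoc]

lemma expDist_comp (p : PMF A) (g : A → C) (k : C → PMF B) (d : C → B → ℝ) :
    expDist p (fun a => k (g a)) (fun a b => d (g a) b) = expDist (p.map g) k d := by
  simp only [expDist_eq_sum, PMF.sum_map_toReal_mul]

lemma margSnd_comp (p : PMF A) (g : A → C) (k : C → PMF B) (b : B) :
    margSnd p (fun a => k (g a)) b = margSnd (p.map g) k b := by
  simp only [margSnd, jointP_eq_mul]
  exact (PMF.sum_map_toReal_mul p g fun c => (k c b).toReal).symm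

lemma mutualInfo_comp (p : PMF A) (g : A → C) (k : C → PMF B) :
    mutualInfo p (fun a => k (g a)) = mutualInfo (p.map g) k := by
  simp only [mutualInfo_eq_sum, margSnd_comp, PMF.sum_map_toReal_mul]

lemma mutualInfo_nonneg (p : PMF A) (k : A → PMF B) : 0 ≤ mutualInfo p k := by
  have hsum : ∑ a, ∑ b, (jointP p k a b - (p a).toReal * margSnd p k b) = 0 := by
    simp only [Finset.sum_sub_distrib, ← Finset.mul_sum]
    rw [← Finset.sum_mul, PMF.sum_toReal_eq_one, one_mul, Finset.sum_comm, sub_eq_zero]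
    rfl
  rw [← hsum]
  refine Finset.sum_le_sum fun a _ => Finset.sum_le_sum fun b _ => ?_
  rcases (jointP_nonneg p k a b).eq_or_lt with hj | hj
  · have hm : 0 ≤ margSnd p k b := hj.le.trans (jointP_le_margSnd p k a b)
    rw [← hj, zero_mul, zero_sub, neg_nonpos]
    positivity
  · have hm : 0 < margSnd p k b := hj.trans_le (jointP_le_margSnd p k a b)
    have hp : 0 < (p a).toReal := by
      refine ENNReal.toReal_nonneg.lt_of_ne fun h0 => hj.ne' ?_
      rw [jointP_eq_mul, ← h0, zero_mul]
    have hlog := Real.one_sub_inv_le_log_of_pos (div_pos hj (mul_pos hp hm))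
    calc jointP p k a b - (p a).toReal * margSnd p k b
        = jointP p k a b * (1 - (jointP p k a b / ((p a).toReal * margSnd p k b))⁻¹) := by
          field_simp
      _ ≤ _ := mul_le_mul_of_nonneg_left hlog hj.le

/-- A deterministic channel choosing a distortion-minimizing reproduction for each symbol
is at least as good as every channel that sees a refinement of that symbol. -/
lemma exists_channel_expDist_map_le [Nonempty B] (p : PMF A) (g : A → C) (d : C → B → ℝ) :
    ∃ k : C → PMF B, ∀ q : A → PMF B,
      expDist (p.map g) k d ≤ expDist p q (fun a b => d (g a) b) := by
  classical
  choose m hm using fun c => Finite.exists_min (d c)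
  refine ⟨fun c => PMF.pure (m c), fun q => ?_⟩
  rw [← expDist_comp, expDist_eq_sum, expDist_eq_sum]
  refine Finset.sum_le_sum fun a _ => mul_le_mul_of_nonneg_left ?_ ENNReal.toReal_nonneg
  calc ∑ b, (PMF.pure (m (g a)) b).toReal * d (g a) b = d (g a) (m (g a)) := by
        rw [Finset.sum_eq_single (m (g a))] <;> simp +contextual [PMF.pure_apply]
    _ = ∑ b, (q a b).toReal * d (g a) (m (g a)) := by
        rw [← Finset.sum_mul, PMF.sum_toReal_eq_one, one_mul]
    _ ≤ ∑ b, (q a b).toReal * d (g a) b :=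
        Finset.sum_le_sum fun b _ =>
          mul_le_mul_of_nonneg_left (hm (g a) b) ENNReal.toReal_nonneg

lemma rate_le_rate_map [Nonempty B] (p : PMF A) (g : A → C) (d : C → B → ℝ) (D : ℝ) :
    rate p (fun a b => d (g a) b) D ≤ rate (p.map g) d D := by
  by_cases hfeas : ∃ k : C → PMF B, expDist (p.map g) k d ≤ D
  · obtain ⟨k, hk⟩ := hfeas
    refine csInf_le_csInf ⟨0, ?_⟩ ⟨_, k, hk, rfl⟩ ?_
    · rintro r ⟨q, -, rfl⟩
      exact mutualInfo_nonneg p q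
    · rintro r ⟨k', hk', rfl⟩
      exact ⟨fun a => k' (g a), (expDist_comp p g k' d).trans_le hk',
        (mutualInfo_comp p g k').symm⟩
  · -- both feasible sets are empty
    obtain ⟨k, hk⟩ := exists_channel_expDist_map_le p g d
    have hX : ∀ q : A → PMF B, ¬ expDist p q (fun a b => d (g a) b) ≤ D :=
      fun q hq => hfeas ⟨k, (hk q).trans hq⟩
    have hY : ∀ k : C → PMF B, ¬ expDist (p.map g) k d ≤ D := not_exists.mp hfeas
    simp [rate, hX, hY]

end Aux

/-- For every channel k : 𝒴 → PMF 𝒴, the composed channel q := k ∘ g satisfies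
(i) equal expected task distortion and (ii) I(X;Ŷ) ≤ I(Y;Ŷ); consequently
R_XY(D;T) ≤ R_Y(D;T) for every D > 0. Here f = h ∘ g. -/
theorem composed_channel_and_RXY_le_RY
    {𝒳 𝒴 𝒯 : Type*} [Fintype 𝒳] [Fintype 𝒴] [Fintype 𝒯]
    [Nonempty 𝒳] [Nonempty 𝒴] [Nonempty 𝒯]
    (pX : PMF 𝒳) (g : 𝒳 → 𝒴) (h : 𝒴 → 𝒯)
    (dT : 𝒯 → 𝒯 → ℝ) (hdT : ∀ t t', 0 ≤ dT t t') :
    (∀ k : 𝒴 → PMF 𝒴,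
      expDist pX (fun x => k (g x)) (fun x yhat => dT (h (g x)) (h yhat))
          = expDist (pX.map g) k (fun y yhat => dT (h y) (h yhat)) ∧
      mutualInfo pX (fun x => k (g x)) ≤ mutualInfo (pX.map g) k) ∧
    (∀ D : ℝ, 0 < D →
      rate pX (fun x yhat => dT (h (g x)) (h yhat)) D
        ≤ rate (pX.map g) (fun y yhat => dT (h y) (h yhat)) D) := by
  exact ⟨fun k => ⟨expDist_comp pX g k fun y yhat => dT (h y) (h yhat),
      (mutualInfo_comp pX g k).le⟩,
    fun D _ => rate_le_rate_map pX g (fun y yhat => dT (h y) (h yhat)) D⟩
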